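/- The successive differences of the IRLS iterates vanish: ‖x^{(t+1)} − x^{(t)}‖ → 0 as t → ∞. -/

import Mathlib

open scoped ContDiff RealInnerProductSpace
open Filter

/-! The IRLS step is the majorization–minimization step for the potential
`Ψ x = ∑ j, ∫ s in 0..‖x - a j‖ ^ 2, g j s`. Since `g j` is nonincreasing, its primitive lies below
its tangents, so `Ψ` lies below a quadratic that agrees with it at the current iterate. The
weighted mean minimizes this quadratic, and by the parallel-axis identity the step lowers `Ψ ≥ 0`
by at least the total weight times the squared step length. All iterates after the first lie in the
convex hull of the `a j`, which keeps the total weight away from `0`; hence the squared step lengths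
are summable. -/

lemma intervalIntegral_le_mul_sub_of_antitoneOn {g : ℝ → ℝ} {u v : ℝ}
    (hg : AntitoneOn g (Set.uIcc u v)) : ∫ s in u..v, g s ≤ g u * (v - u) := by
  rw [mul_comm, ← smul_eq_mul, ← intervalIntegral.integral_const]
  rcases le_total u v with huv | hvu
  · exact intervalIntegral.integral_mono_on huv hg.intervalIntegrable intervalIntegrable_const
      fun s hs => hg Set.left_mem_uIcc (Set.Icc_subset_uIcc hs) hs.1
  · rw [intervalIntegral.integral_symm v u, intervalIntegral.integral_symm v u, neg_le_neg_iff]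
    exact intervalIntegral.integral_mono_on hvu intervalIntegrable_const
      hg.intervalIntegrable.symm
      fun s hs => hg (Set.Icc_subset_uIcc' hs) Set.left_mem_uIcc hs.2

lemma tendsto_zero_of_add_mul_sq_le {f r : ℕ → ℝ} {c m : ℝ} (hc : 0 < c) (hf : ∀ t, m ≤ f t)
    (h : ∀ t, f (t + 1) + c * r t ^ 2 ≤ f t) : Tendsto r atTop (nhds 0) := by
  have hsum (T : ℕ) : ∑ t ∈ Finset.range T, r t ^ 2 ≤ (f 0 - m) / c := by
    rw [le_div_iff₀' hc, Finset.mul_sum]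
    calc ∑ t ∈ Finset.range T, c * r t ^ 2 ≤ ∑ t ∈ Finset.range T, (f t - f (t + 1)) :=
          Finset.sum_le_sum fun t _ => by linarith [h t]
      _ = f 0 - f T := Finset.sum_range_sub' f T
      _ ≤ f 0 - m := sub_le_sub_left (hf T) _
  have hsq : Tendsto (fun t => r t ^ 2) atTop (nhds 0) :=
    (summable_of_sum_range_le (fun t => sq_nonneg (r t)) hsum).tendsto_atTop_zero
  rw [tendsto_zero_iff_abs_tendsto_zero]
  simpa [Function.comp_def, Real.sqrt_sq_eq_abs] using hsq.sqrt

section Step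

variable {ι E : Type*} [Fintype ι] [SeminormedAddCommGroup E] [NormedSpace ℝ E]

/-- The iteration map of iteratively reweighted least squares: the mean of the points `a j`, each
weighted by `g j` of its squared distance to `x`. Passing the squared distance turns the smoothed
`p`-th power objective into the case `g j s = w j * (s + ε) ^ (p / 2 - 1)`. -/
noncomputable def irlsStep (g : ι → ℝ → ℝ) (a : ι → E) (x : E) : E :=
  Finset.univ.centerMass (fun j => g j (‖x - a j‖ ^ 2)) a

lemma irlsStep_mem_convexHull [Nonempty ι] {g : ι → ℝ → ℝ} (hpos : ∀ j s, 0 ≤ s → 0 < g j s)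
    (a : ι → E) (x : E) : irlsStep g a x ∈ convexHull ℝ (Set.range a) :=
  Finset.univ.centerMass_mem_convexHull (fun j _ => (hpos j _ (sq_nonneg _)).le)
    (Finset.sum_pos (fun j _ => hpos j _ (sq_nonneg _)) Finset.univ_nonempty)
    fun j _ => Set.mem_range_self j

lemma exists_norm_sub_le_of_irlsStep [Nonempty ι] {g : ι → ℝ → ℝ}
    (hpos : ∀ j s, 0 ≤ s → 0 < g j s) {a : ι → E} {x : ℕ → E}
    (hx : ∀ t, x (t + 1) = irlsStep g a (x t)) (z : E) : ∃ R, ∀ t, ‖x t - z‖ ≤ R := by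
  have hbdd : Bornology.IsBounded (insert (x 0) (convexHull ℝ (Set.range a))) :=
    (isBounded_convexHull.2 (Set.finite_range a).isBounded).insert _
  obtain ⟨R, hR⟩ := hbdd.subset_closedBall z
  refine ⟨R, fun t => mem_closedBall_iff_norm.1 (hR ?_)⟩
  cases t with
  | zero => exact Set.mem_insert _ _
  | succ t => exact Set.mem_insert_of_mem _ (hx t ▸ irlsStep_mem_convexHull hpos a (x t))

lemma exists_pos_forall_le_sum_weight [Nonempty ι] {g : ι → ℝ → ℝ}
    (hg : ∀ j, AntitoneOn (g j) (Set.Ici 0)) (hpos : ∀ j s, 0 ≤ s → 0 < g j s)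
    {a : ι → E} {x : ℕ → E} (hx : ∀ t, x (t + 1) = irlsStep g a (x t)) :
    ∃ c, 0 < c ∧ ∀ t, c ≤ ∑ j, g j (‖x t - a j‖ ^ 2) := by
  have i : ι := Classical.arbitrary ι
  obtain ⟨R, hR⟩ := exists_norm_sub_le_of_irlsStep hpos hx (a i)
  refine ⟨g i (R ^ 2), hpos i _ (sq_nonneg R), fun t => ?_⟩
  calc g i (R ^ 2) ≤ g i (‖x t - a i‖ ^ 2) :=
        hg i (Set.mem_Ici.2 (sq_nonneg _)) (Set.mem_Ici.2 (sq_nonneg R))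
          (pow_le_pow_left₀ (norm_nonneg _) (hR t) 2)
    _ ≤ ∑ j, g j (‖x t - a j‖ ^ 2) :=
        Finset.single_le_sum (f := fun j => g j (‖x t - a j‖ ^ 2))
          (fun j _ => (hpos j _ (sq_nonneg _)).le) (Finset.mem_univ i)

end Step

section Objective

variable {ι E : Type*} [Fintype ι] [SeminormedAddCommGroup E]

/-- The objective that the map `irlsStep g a` decreases. Integrating the weight functions from `0`
normalizes it to be nonnegative for nonnegative weights; for
`g j s = w j * (s + ε) ^ (p / 2 - 1)` with `p ≠ 0` it is
`2 / p * ∑ j, w j * (‖x - a j‖ ^ 2 + ε) ^ (p / 2)` up to an additive constant. -/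
noncomputable def irlsObjective (g : ι → ℝ → ℝ) (a : ι → E) (x : E) : ℝ :=
  ∑ j, ∫ s in (0 : ℝ)..‖x - a j‖ ^ 2, g j s

lemma irlsObjective_nonneg {g : ι → ℝ → ℝ} (hg : ∀ j s, 0 ≤ s → 0 ≤ g j s) (a : ι → E) (x : E) :
    0 ≤ irlsObjective g a x :=
  Finset.sum_nonneg fun j _ =>
    intervalIntegral.integral_nonneg (sq_nonneg _) fun s hs => hg j s hs.1

lemma irlsObjective_sub_le {g : ι → ℝ → ℝ} (hg : ∀ j, AntitoneOn (g j) (Set.Ici 0)) (a : ι → E)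
    (x y : E) : irlsObjective g a y - irlsObjective g a x ≤
      ∑ j, g j (‖x - a j‖ ^ 2) * (‖y - a j‖ ^ 2 - ‖x - a j‖ ^ 2) := by
  have hanti (j : ι) {u v : ℝ} (hu : 0 ≤ u) (hv : 0 ≤ v) : AntitoneOn (g j) (Set.uIcc u v) :=
    (hg j).mono (Set.ordConnected_Ici.uIcc_subset hu hv)
  rw [irlsObjective, irlsObjective, ← Finset.sum_sub_distrib]
  refine Finset.sum_le_sum fun j _ => ?_
  rw [intervalIntegral.integral_interval_sub_left
    (hanti j le_rfl (sq_nonneg _)).intervalIntegrable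
    (hanti j le_rfl (sq_nonneg _)).intervalIntegrable]
  exact intervalIntegral_le_mul_sub_of_antitoneOn (hanti j (sq_nonneg _) (sq_nonneg _))

end Objective

section Descent

variable {ι E : Type*} [Fintype ι] [SeminormedAddCommGroup E] [InnerProductSpace ℝ E]

lemma sum_mul_norm_sub_sq_eq_add_centerMass {μ : ι → ℝ} (hμ : ∑ j, μ j ≠ 0) (a : ι → E) (x : E) :
    ∑ j, μ j * ‖x - a j‖ ^ 2 = ∑ j, μ j * ‖Finset.univ.centerMass μ a - a j‖ ^ 2 +
      (∑ j, μ j) * ‖x - Finset.univ.centerMass μ a‖ ^ 2 := by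
  set y := Finset.univ.centerMass μ a with hy
  have hcross : ∑ j, μ j * ⟪x - y, y - a j⟫ = 0 := by
    simp_rw [← real_inner_smul_right, ← inner_sum, smul_sub, Finset.sum_sub_distrib,
      ← Finset.sum_smul]
    rw [hy, Finset.centerMass, smul_inv_smul₀ hμ, sub_self, inner_zero_right]
  calc ∑ j, μ j * ‖x - a j‖ ^ 2
      = ∑ j, (μ j * ‖y - a j‖ ^ 2 + μ j * ‖x - y‖ ^ 2 + 2 * (μ j * ⟪x - y, y - a j⟫)) :=
        Finset.sum_congr rfl fun j _ => by
          rw [← sub_add_sub_cancel x y (a j), norm_add_sq_real]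
          ring
    _ = ∑ j, μ j * ‖y - a j‖ ^ 2 + (∑ j, μ j) * ‖x - y‖ ^ 2 := by
        rw [Finset.sum_add_distrib, Finset.sum_add_distrib, ← Finset.mul_sum, hcross, mul_zero,
          add_zero, Finset.sum_mul]

lemma irlsObjective_irlsStep_add_le {g : ι → ℝ → ℝ} (hg : ∀ j, AntitoneOn (g j) (Set.Ici 0))
    {a : ι → E} {x : E} (hμ : ∑ j, g j (‖x - a j‖ ^ 2) ≠ 0) :
    irlsObjective g a (irlsStep g a x) +
      (∑ j, g j (‖x - a j‖ ^ 2)) * ‖irlsStep g a x - x‖ ^ 2 ≤ irlsObjective g a x := by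
  have htangent := irlsObjective_sub_le hg a x (irlsStep g a x)
  have hsteiner := sum_mul_norm_sub_sq_eq_add_centerMass hμ a x
  rw [← irlsStep, norm_sub_rev x] at hsteiner
  simp_rw [mul_sub, Finset.sum_sub_distrib] at htangent
  linarith

theorem stmt_13_general [Nonempty ι] {g : ι → ℝ → ℝ}
    (hg : ∀ j, AntitoneOn (g j) (Set.Ici 0)) (hpos : ∀ j s, 0 ≤ s → 0 < g j s)
    {a : ι → E} {x : ℕ → E} (hx : ∀ t, x (t + 1) = irlsStep g a (x t)) :
    Tendsto (fun t => ‖x (t + 1) - x t‖) atTop (nhds 0) := by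
  obtain ⟨c, hc, hweight⟩ := exists_pos_forall_le_sum_weight hg hpos hx
  refine tendsto_zero_of_add_mul_sq_le hc
    (fun t => irlsObjective_nonneg (fun j s hs => (hpos j s hs).le) a (x t)) fun t => ?_
  calc irlsObjective g a (x (t + 1)) + c * ‖x (t + 1) - x t‖ ^ 2
      ≤ irlsObjective g a (x (t + 1)) +
          (∑ j, g j (‖x t - a j‖ ^ 2)) * ‖x (t + 1) - x t‖ ^ 2 := by gcongr; exact hweight t
    _ ≤ irlsObjective g a (x t) :=
        hx t ▸ irlsObjective_irlsStep_add_le hg (hc.trans_le (hweight t)).ne'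

end Descent

lemma antitoneOn_mul_add_rpow {w ε q : ℝ} (hw : 0 ≤ w) (hε : 0 < ε) (hq : q ≤ 0) :
    AntitoneOn (fun s : ℝ => w * (s + ε) ^ q) (Set.Ici 0) := fun _ hs _ _ hst =>
  mul_le_mul_of_nonneg_left
    (Real.rpow_le_rpow_of_nonpos (add_pos_of_nonneg_of_pos hs hε) (by gcongr) hq) hw

theorem stmt_13
    (d n : ℕ) (hd : 1 ≤ d) (hn : 1 ≤ n)
    (a : Fin n → EuclideanSpace ℝ (Fin d))
    (w : Fin n → ℝ) (hw : ∀ j, 0 < w j)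
    (ε : ℝ) (hε : 0 < ε)
    (p : ℝ) (hp0 : 0 < p) (hp2 : p ≤ 2)
    (Φ : EuclideanSpace ℝ (Fin d) → ℝ)
    (hΦ : ∀ x, Φ x = ∑ j, w j * (‖x - a j‖ ^ 2 + ε) ^ (p / 2))
    (x : ℕ → EuclideanSpace ℝ (Fin d))
    (hx : ∀ t, x (t + 1) =
      (∑ j, w j * (‖x t - a j‖ ^ 2 + ε) ^ (p / 2 - 1))⁻¹ •
        ∑ j, (w j * (‖x t - a j‖ ^ 2 + ε) ^ (p / 2 - 1)) • a j) :
    Tendsto (fun t => ‖x (t + 1) - x t‖) atTop (nhds 0) :=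
  have : Nonempty (Fin n) := ⟨⟨0, hn⟩⟩
  stmt_13_general (g := fun j s => w j * (s + ε) ^ (p / 2 - 1))
    (fun j => antitoneOn_mul_add_rpow (hw j).le hε (by linarith))
    (fun j s hs => mul_pos (hw j) (Real.rpow_pos_of_pos (by linarith) _)) hx
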